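/- Let m ≥ 2 and let g, h ∈ DA(m) and i ∈ {1,2} be such that gh lies in the cyclic subgroup ⟨x_i⟩. Then there exist w ∈ DA(m) and integers s, t such that g = x_i^s w with ℓ(g) = |s| + ℓ(w), and h = w^{-1} x_i^t with ℓ(h) = ℓ(w) + |t|. -/

import Mathlib

namespace ArtinRD

/-- The alternating product `xyxy...` with `m` factors, starting with `x`. -/
def altProd {G : Type*} [Monoid G] : ℕ → G → G → G
  | 0, _, _ => 1
  | n + 1, x, y => x * altProd n y x

/-- The Artin relators determined by a Coxeter-type matrix `M` (`⊤` meaning `∞`). -/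
def artinRels (n : ℕ) (M : Fin n → Fin n → ℕ∞) : Set (FreeGroup (Fin n)) :=
  {r | ∃ i j : Fin n, i ≠ j ∧ ∃ m : ℕ, M i j = (m : ℕ∞) ∧
    r = altProd m (FreeGroup.of i) (FreeGroup.of j) *
        (altProd m (FreeGroup.of j) (FreeGroup.of i))⁻¹}

/-- The Artin group associated to the matrix `M`. -/
abbrev ArtinGroup (n : ℕ) (M : Fin n → Fin n → ℕ∞) : Type := PresentedGroup (artinRels n M)

/-- The standard generator `x_i` of the Artin group. -/
def gen (n : ℕ) (M : Fin n → Fin n → ℕ∞) (i : Fin n) : ArtinGroup n M := PresentedGroup.of i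

/-- The set `A = {x_1^{±1}, ..., x_n^{±1}}` of standard letters. -/
def genSet (n : ℕ) (M : Fin n → Fin n → ℕ∞) : Set (ArtinGroup n M) :=
  {g | ∃ i : Fin n, g = gen n M i ∨ g = (gen n M i)⁻¹}

/-- Word length of `g` with respect to a set `S`: the least `N` such that `g` is a
product of `N` elements of `S`. -/
noncomputable def wordLength {G : Type*} [Group G] (S : Set G) (g : G) : ℕ :=
  sInf {N : ℕ | ∃ w : List G, (∀ a ∈ w, a ∈ S) ∧ w.length = N ∧ w.prod = g}

/-- The word length on an Artin group with respect to the standard letters. -/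
noncomputable def ℓA (n : ℕ) (M : Fin n → Fin n → ℕ∞) : ArtinGroup n M → ℕ :=
  wordLength (genSet n M)

/-- A letter: a generator index together with a sign (`true` = positive). -/
abbrev Letter (n : ℕ) := Fin n × Bool

/-- The group element corresponding to a letter. -/
def toGen (n : ℕ) (M : Fin n → Fin n → ℕ∞) (l : Letter n) : ArtinGroup n M :=
  if l.2 then gen n M l.1 else (gen n M l.1)⁻¹

/-- The group element represented by a word over the letters. -/
def wordElt (n : ℕ) (M : Fin n → Fin n → ℕ∞) (w : List (Letter n)) : ArtinGroup n M :=
  (w.map (toGen n M)).prod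

/-- A word is geodesic if its length equals the word length of the element it represents. -/
def IsGeodesic (n : ℕ) (M : Fin n → Fin n → ℕ∞) (w : List (Letter n)) : Prop :=
  wordLength (genSet n M) (wordElt n M w) = w.length

/-- `h` is a left divisor of `g`: the factorisation `g = h ⬝ (h⁻¹ g)` is geodesic. -/
def IsLeftDiv {G : Type*} [Group G] (ℓ : G → ℕ) (h g : G) : Prop :=
  ℓ h + ℓ (h⁻¹ * g) = ℓ g

/-- `h` is a right divisor of `g`: the factorisation `g = (g h⁻¹) ⬝ h` is geodesic. -/
def IsRightDiv {G : Type*} [Group G] (ℓ : G → ℕ) (h g : G) : Prop :=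
  ℓ (g * h⁻¹) + ℓ h = ℓ g

/-- The two-generator ("dihedral") subgroup `G(i,j)`. -/
def Gij (n : ℕ) (M : Fin n → Fin n → ℕ∞) (i j : Fin n) : Subgroup (ArtinGroup n M) :=
  Subgroup.closure {gen n M i, gen n M j}

/-- The letters `x_i^{±1}, x_j^{±1}` as group elements. -/
def lettersIJ (n : ℕ) (M : Fin n → Fin n → ℕ∞) (i j : Fin n) : Set (ArtinGroup n M) :=
  {gen n M i, (gen n M i)⁻¹, gen n M j, (gen n M j)⁻¹}

/-- The maximal `{x_i,x_j}`-prefix of a word. -/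
def ijPrefix (n : ℕ) (i j : Fin n) (w : List (Letter n)) : List (Letter n) :=
  w.takeWhile (fun l => l.1 == i || l.1 == j)

/-- `h` is a left divisor of `g` lying in `G(i,j)` of maximal word length. -/
def IsMaxLD (n : ℕ) (M : Fin n → Fin n → ℕ∞) (i j : Fin n) (g h : ArtinGroup n M) : Prop :=
  h ∈ Gij n M i j ∧ IsLeftDiv (ℓA n M) h g ∧
    ∀ h' ∈ Gij n M i j, IsLeftDiv (ℓA n M) h' g → ℓA n M h' ≤ ℓA n M h

/-- `h` is a right divisor of `g` lying in `G(i,j)` of maximal word length. -/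
def IsMaxRD (n : ℕ) (M : Fin n → Fin n → ℕ∞) (i j : Fin n) (g h : ArtinGroup n M) : Prop :=
  h ∈ Gij n M i j ∧ IsRightDiv (ℓA n M) h g ∧
    ∀ h' ∈ Gij n M i j, IsRightDiv (ℓA n M) h' g → ℓA n M h' ≤ ℓA n M h

/-- The Coxeter matrix of the dihedral Artin group `DA(m)`. -/
def DMat (m : ℕ) : Fin 2 → Fin 2 → ℕ∞ := fun i j => if i = j then 1 else (m : ℕ∞)

/-- The dihedral Artin group `DA(m) = ⟨x₁, x₂ ∣ ₘ(x₁,x₂) = ₘ(x₂,x₁)⟩`. -/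
abbrev DA (m : ℕ) : Type := ArtinGroup 2 (DMat m)

/-- The word length on `DA(m)` with respect to `{x₁^{±1}, x₂^{±1}}`. -/
noncomputable def ℓD (m : ℕ) : DA m → ℕ := ℓA 2 (DMat m)

/-- The Garside element `Δ = ₘ(x₁,x₂)` of `DA(m)`. -/
def Delta (m : ℕ) : DA m := altProd m (gen 2 (DMat m) 0) (gen 2 (DMat m) 1)

/-- A positive element of `DA(m)`: a product of the generators. -/
def posElt (m : ℕ) (g : DA m) : Prop :=
  g ∈ Submonoid.closure ({gen 2 (DMat m) 0, gen 2 (DMat m) 1} : Set (DA m))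

/-- A negative element of `DA(m)`: a product of the inverses of the generators. -/
def negElt (m : ℕ) (g : DA m) : Prop :=
  g ∈ Submonoid.closure ({(gen 2 (DMat m) 0)⁻¹, (gen 2 (DMat m) 1)⁻¹} : Set (DA m))

/-- `k` is the largest exponent such that `Δ^k` is a left divisor of `g`
(i.e. `d(g) = k` for a positive element `g`). -/
def IsMaxDeltaPow (m : ℕ) (k : ℕ) (g : DA m) : Prop :=
  IsLeftDiv (ℓD m) (Delta m ^ k) g ∧ ∀ k' : ℕ, IsLeftDiv (ℓD m) (Delta m ^ k') g → k' ≤ k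

/-- `k` is the largest exponent such that `Δ^{-k}` is a left divisor of `g`
(i.e. `d(g) = k` for a negative element `g`). -/
def IsMaxNegDeltaPow (m : ℕ) (k : ℕ) (g : DA m) : Prop :=
  IsLeftDiv (ℓD m) ((Delta m)⁻¹ ^ k) g ∧
    ∀ k' : ℕ, IsLeftDiv (ℓD m) ((Delta m)⁻¹ ^ k') g → k' ≤ k

/-! ### Normal form states and the action of the generators -/

/-- Flip a letter `n` times. -/
def fl (n : ℕ) (b : Bool) : Bool := xor b n.bodd

theorem fl_zero (b : Bool) : fl 0 b = b := by simp [fl]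

theorem fl_succ (n : ℕ) (b : Bool) : fl (n + 1) b = !(fl n b) := by
  simp [fl]

theorem fl_not (n : ℕ) (b : Bool) : fl n (!b) = !(fl n b) := by
  simp [fl]

theorem fl_fl (n : ℕ) (b : Bool) : fl n (fl n b) = b := by
  simp [fl]

theorem fl_add (n k : ℕ) (b : Bool) : fl (n + k) b = fl k (fl n b) := by
  simp [fl]

/-- Raw states: first letter, lengths of the normal form factors, exponent of `Δ`. -/
abbrev Raw := Bool × List ℕ × ℤ

/-- Normalise the first letter when the list is empty. -/
def nrm (c : Bool) (l : List ℕ) (k : ℤ) : Raw :=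
  match l with
  | [] => (true, [], k)
  | a :: l => (c, a :: l, k)

/-- Left multiplication by the generator `b`. -/
def stp (m : ℕ) (b : Bool) : Raw → Raw
  | (_, [], k) => (b, [1], k)
  | (c, a :: l, k) =>
      if c = b then (b, 1 :: a :: l, k)
      else if a + 1 < m then (b, (a + 1) :: l, k)
      else nrm (!b) l (k + 1)

/-- Left multiplication by the inverse of the generator `b`. -/
def stn (m : ℕ) (b : Bool) : Raw → Raw
  | (_, [], k) => (!b, [m - 1], k - 1)
  | (c, a :: l, k) =>
      if c = b then (if a = 1 then nrm b l k else (!b, (a - 1) :: l, k))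
      else (!b, (m - 1) :: a :: l, k - 1)

/-- The normal form condition. -/
def Good (m : ℕ) (s : Raw) : Prop :=
  (∀ a ∈ s.2.1, 1 ≤ a ∧ a < m) ∧ (s.2.1 = [] → s.1 = true)

theorem good_nrm {m : ℕ} {c : Bool} {l : List ℕ} {k : ℤ} (h : ∀ a ∈ l, 1 ≤ a ∧ a < m) :
    Good m (nrm c l k) := by
  cases l with
  | nil => simp [nrm, Good]
  | cons a l => exact ⟨h, by simp [nrm]⟩

theorem good_stp {m : ℕ} (hm : 2 ≤ m) (b : Bool) (s : Raw) (h : Good m s) :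
    Good m (stp m b s) := by
  obtain ⟨c, l, k⟩ := s
  obtain ⟨h1, h2⟩ := h
  cases l with
  | nil => simp [stp, Good]; omega
  | cons a l =>
    simp only [List.mem_cons, forall_eq_or_imp] at h1
    simp only [stp]
    split_ifs with h3 h4
    · simp only [Good, List.mem_cons, forall_eq_or_imp]
      exact ⟨⟨by omega, h1⟩, by simp⟩
    · simp only [Good, List.mem_cons, forall_eq_or_imp]
      exact ⟨⟨by omega, h1.2⟩, by simp⟩
    · exact good_nrm h1.2

theorem good_stn {m : ℕ} (hm : 2 ≤ m) (b : Bool) (s : Raw) (h : Good m s) :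
    Good m (stn m b s) := by
  obtain ⟨c, l, k⟩ := s
  obtain ⟨h1, h2⟩ := h
  cases l with
  | nil => simp [stn, Good]; omega
  | cons a l =>
    simp only [List.mem_cons, forall_eq_or_imp] at h1
    simp only [stn]
    split_ifs with h3 h4
    · exact good_nrm h1.2
    · simp only [Good, List.mem_cons, forall_eq_or_imp]
      exact ⟨⟨by omega, h1.2⟩, by simp⟩
    · simp only [Good, List.mem_cons, forall_eq_or_imp]
      exact ⟨⟨by omega, h1⟩, by simp⟩

theorem stp_nrm (m : ℕ) (b : Bool) (l : List ℕ) (k : ℤ) :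
    stp m b (nrm b l k) = (b, 1 :: l, k) := by
  cases l <;> simp [nrm, stp]

theorem stn_nrm (m : ℕ) (b : Bool) (l : List ℕ) (k : ℤ) :
    stn m b (nrm (!b) l k) = (!b, (m - 1) :: l, k - 1) := by
  cases l <;> simp [nrm, stn]

theorem nrm_good {m : ℕ} {c : Bool} {l : List ℕ} {k : ℤ} (h : Good m (c, l, k)) :
    nrm c l k = (c, l, k) := by
  cases l with
  | nil => have : c = true := h.2 rfl
           simp [nrm, this]
  | cons a l => rfl

theorem stp_stn {m : ℕ} (hm : 2 ≤ m) (b : Bool) (s : Raw) (h : Good m s) :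
    stp m b (stn m b s) = s := by
  obtain ⟨c, l, k⟩ := s
  have h0 := nrm_good h
  obtain ⟨h1, h2⟩ := h
  have e : ¬ (m - 1 + 1 < m) := by omega
  cases l with
  | nil =>
    have : c = true := h2 rfl
    simp [stn, stp, e, nrm, this]
  | cons a l =>
    simp only [List.mem_cons, forall_eq_or_imp] at h1
    simp only [stn]
    split_ifs with h3 h4
    · rw [stp_nrm, h3, h4]
    · have : a - 1 + 1 = a := by omega
      simp [stp, this, h3, h1.1.2]
    · have : c = !b := by cases b <;> cases c <;> simp_all
      simp [stp, e, nrm, this]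

theorem stn_stp {m : ℕ} (hm : 2 ≤ m) (b : Bool) (s : Raw) (h : Good m s) :
    stn m b (stp m b s) = s := by
  obtain ⟨c, l, k⟩ := s
  have h0 := nrm_good h
  obtain ⟨h1, h2⟩ := h
  cases l with
  | nil =>
    have : c = true := h2 rfl
    simp [stn, stp, nrm, this]
  | cons a l =>
    simp only [List.mem_cons, forall_eq_or_imp] at h1
    simp only [stp]
    split_ifs with h3 h4
    · simp [stn, nrm, h3]
    · have : c = !b := by cases b <;> cases c <;> simp_all
      have h5 : a ≠ 0 := by omega
      simp [stn, this, h5]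
    · have : c = !b := by cases b <;> cases c <;> simp_all
      have h5 : m - 1 = a := by omega
      rw [stn_nrm, h5, this]
      simp

/-- Apply the alternating word of length `n` with leftmost letter `b`. -/
def run (m : ℕ) : ℕ → Bool → Raw → Raw
  | 0, _, s => s
  | n + 1, b, s => stp m b (run m n (!b) s)

theorem run1 {m : ℕ} (c : Bool) (l : List ℕ) (k : ℤ) (n : ℕ) :
    ∀ b, (l = [] ∨ c = fl n b) → n + 1 < m →
      run m (n + 1) b (c, l, k) = (b, (n + 1) :: l, k) := by
  induction n with
  | zero =>
    intro b h _
    simp only [run]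
    cases l with
    | nil => simp [stp]
    | cons a l =>
      have : c = b := by simpa [fl_zero] using h
      simp [stp, this]
  | succ n ih =>
    intro b h hn
    have h' : l = [] ∨ c = fl n (!b) := by rwa [fl_not, ← fl_succ]
    rw [run, ih (!b) h' (by omega)]
    simp [stp, hn]

theorem run1m {m : ℕ} (hm : 2 ≤ m) (c : Bool) (l : List ℕ) (k : ℤ) (b : Bool)
    (h : l = [] ∨ c = !(fl m b)) : run m m b (c, l, k) = nrm (!b) l (k + 1) := by
  obtain ⟨n, rfl⟩ : ∃ n, m = n + 1 + 1 := ⟨m - 2, by omega⟩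
  have h' : l = [] ∨ c = fl n (!b) := by
    rw [fl_succ, fl_succ] at h
    rw [fl_not]; simpa using h
  rw [run, run1 c l k n (!b) h' (by omega)]
  simp [stp]

theorem run2 {m : ℕ} (a : ℕ) (c : Bool) (l : List ℕ) (k : ℤ) (n : ℕ) :
    ∀ b, c = fl n b → n + a < m → run m n b (c, a :: l, k) = (b, (a + n) :: l, k) := by
  induction n with
  | zero =>
    intro b h _
    simp [run, h, fl_zero]
  | succ n ih =>
    intro b h hn
    rw [run, ih (!b) (by rw [h, fl_not, fl_succ]) (by omega)]
    have : a + n + 1 < m := by omega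
    simp [stp, this]
    omega

theorem run3 {m : ℕ} (a : ℕ) (ha : a < m) (c : Bool) (l : List ℕ) (k : ℤ) (n : ℕ)
    (b : Bool) (h : c = fl n b) (hn : n + a = m) :
    run m n b (c, a :: l, k) = nrm (!b) l (k + 1) := by
  obtain ⟨n, rfl⟩ : ∃ n', n = n' + 1 := ⟨n - 1, by omega⟩
  rw [run, run2 a c l k n (!b) (by rw [h, fl_not, fl_succ]) (by omega)]
  have : ¬ (a + n + 1 < m) := by omega
  simp [stp, this]

theorem run4 {m : ℕ} (a : ℕ) (ha : a < m) (c : Bool) (l : List ℕ) (k : ℤ) (j : ℕ) :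
    ∀ (n : ℕ) (b : Bool), c = fl n b → n + a = m + (j + 1) → j + 1 < m →
    run m n b (c, a :: l, k) = (b, (j + 1) :: l, k + 1) := by
  induction j with
  | zero =>
    intro n b h hn hj
    obtain ⟨n, rfl⟩ : ∃ n', n = n' + 1 := ⟨n - 1, by omega⟩
    rw [run, run3 a ha c l k n (!b) (by rw [h, fl_not, fl_succ]) (by omega)]
    simp [stp_nrm]
  | succ j ih =>
    intro n b h hn hj
    obtain ⟨n, rfl⟩ : ∃ n', n = n' + 1 := ⟨n - 1, by omega⟩
    rw [run, ih n (!b) (by rw [h, fl_not, fl_succ]) (by omega) (by omega)]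
    simp [stp, hj]

theorem run_m {m : ℕ} (hm : 2 ≤ m) (b : Bool) (s : Raw) (h : Good m s) :
    run m m b s = nrm (fl m s.1) s.2.1 (s.2.2 + 1) := by
  obtain ⟨c, l, k⟩ := s
  obtain ⟨h1, h2⟩ := h
  cases l with
  | nil => rw [run1m hm c [] k b (Or.inl rfl)]; simp [nrm]
  | cons a l =>
    simp only [List.mem_cons, forall_eq_or_imp] at h1
    by_cases hc : c = !(fl m b)
    · rw [run1m hm c _ k b (Or.inr hc), hc, fl_not, fl_fl]
    · have hc' : c = fl m b := by
        revert hc; cases c <;> cases fl m b <;> simp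
      obtain ⟨j, rfl⟩ : ∃ j, a = j + 1 := ⟨a - 1, by omega⟩
      rw [run4 (j + 1) h1.1.2 c l k j m b hc' rfl h1.1.2, hc']
      simp [nrm, fl_fl]

/-- The normal form states. -/
abbrev St (m : ℕ) := {s : Raw // Good m s}

/-- The permutation of the states given by a generator. -/
def permGen (m : ℕ) (hm : 2 ≤ m) (b : Bool) : Equiv.Perm (St m) where
  toFun s := ⟨stp m b s.1, good_stp hm b s.1 s.2⟩
  invFun s := ⟨stn m b s.1, good_stn hm b s.1 s.2⟩
  left_inv s := Subtype.ext (stn_stp hm b s.1 s.2)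
  right_inv s := Subtype.ext (stp_stn hm b s.1 s.2)

theorem altProd_perm (m : ℕ) (hm : 2 ≤ m) (n : ℕ) : ∀ (b : Bool) (s : St m),
    ((altProd n (permGen m hm b) (permGen m hm (!b))) s).1 = run m n b s.1 := by
  induction n with
  | zero => intro b s; simp [altProd, run]
  | succ n ih =>
    intro b s
    have := ih (!b) s
    rw [Bool.not_not] at this
    simp only [altProd, run, Equiv.Perm.mul_apply, ← this]
    rfl

theorem altProd_permGen (m : ℕ) (hm : 2 ≤ m) (b : Bool) :
    altProd m (permGen m hm b) (permGen m hm (!b)) =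
      altProd m (permGen m hm (!b)) (permGen m hm b) := by
  ext1 s
  apply Subtype.ext
  have h := altProd_perm m hm m (!b) s
  rw [Bool.not_not] at h
  rw [altProd_perm, h, run_m hm _ _ s.2, run_m hm _ _ s.2]

theorem map_altProd {G H : Type*} [Group G] [Group H] (f : G →* H) (n : ℕ) :
    ∀ x y : G, f (altProd n x y) = altProd n (f x) (f y) := by
  induction n with
  | zero => intro x y; simp [altProd]
  | succ n ih => intro x y; simp [altProd, ih]

/-- Generator index as a Boolean. -/
def toB (i : Fin 2) : Bool := i == 1

/-- The action of `DA m` on states. -/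
def act (m : ℕ) (hm : 2 ≤ m) : DA m →* Equiv.Perm (St m) :=
  PresentedGroup.toGroup (f := fun i => permGen m hm (toB i)) (by
    rintro r ⟨i, j, hij, n, hn, rfl⟩
    have hnm : n = m := by
      simp only [DMat, hij, if_false] at hn
      exact_mod_cast hn.symm
    subst hnm
    have hb : toB j = !(toB i) := by
      clear hn; revert hij; revert i j; decide
    rw [map_mul, map_inv, map_altProd, map_altProd, mul_inv_eq_one]
    simp only [FreeGroup.lift_apply_of, hb]
    exact altProd_permGen n hm (toB i))

/-- The generators indexed by Booleans. -/
def xg (m : ℕ) (b : Bool) : DA m := gen 2 (DMat m) (cond b 1 0)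

theorem act_xg (m : ℕ) (hm : 2 ≤ m) (b : Bool) : act m hm (xg m b) = permGen m hm b := by
  have : toB (cond b 1 0) = b := by cases b <;> rfl
  simp only [act, xg, gen, PresentedGroup.toGroup.of, this]

theorem exists_xg (m : ℕ) (i : Fin 2) : ∃ b, gen 2 (DMat m) i = xg m b := by
  refine ⟨toB i, ?_⟩
  fin_cases i <;> rfl

/-! ### Realisation of states -/

/-- Alternating product with first letter `b`. -/
def A (m n : ℕ) (b : Bool) : DA m := altProd n (xg m b) (xg m (!b))

theorem A_zero (m : ℕ) (b : Bool) : A m 0 b = 1 := rfl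

theorem A_succ (m n : ℕ) (b : Bool) : A m (n + 1) b = xg m b * A m n (!b) := by
  simp [A, altProd]

theorem A_add (m n k : ℕ) : ∀ b, A m (n + k) b = A m n b * A m k (fl n b) := by
  induction n with
  | zero => intro b; simp [A_zero, fl_zero]
  | succ n ih =>
    intro b
    rw [show n + 1 + k = (n + k) + 1 by omega, A_succ, ih, A_succ, fl_not, fl_succ, mul_assoc]

theorem A_m (m : ℕ) (b : Bool) : A m m b = Delta m := by
  have key : A m m false = A m m true := by
    have hrel : (altProd m (FreeGroup.of 0) (FreeGroup.of 1) *
        (altProd m (FreeGroup.of 1) (FreeGroup.of 0))⁻¹ : FreeGroup (Fin 2))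
        ∈ artinRels 2 (DMat m) := ⟨0, 1, by decide, m, by simp [DMat], rfl⟩
    have h := PresentedGroup.one_of_mem hrel
    rw [map_mul, map_inv, map_altProd, map_altProd, mul_inv_eq_one] at h
    exact h
  cases b
  · rfl
  · rw [← key]; rfl

theorem Delta_comm (m : ℕ) (b : Bool) : Delta m * xg m b = xg m (fl m b) * Delta m := by
  have h1 := A_add m m 1 (fl m b)
  rw [A_succ, A_m, A_m, fl_fl, A_succ, A_zero, mul_one] at h1
  exact h1.symm

theorem Delta_A (m n : ℕ) : ∀ b, Delta m * A m n b = A m n (fl m b) * Delta m := by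
  induction n with
  | zero => intro b; simp [A_zero]
  | succ n ih =>
    intro b
    rw [A_succ, ← mul_assoc, Delta_comm, mul_assoc, ih, A_succ, fl_not, mul_assoc]

/-- The positive word attached to a list of factor lengths. -/
def W (m : ℕ) : Bool → List ℕ → DA m
  | _, [] => 1
  | c, a :: l => A m a c * W m (!(fl a c)) l

theorem fl_comm (m n : ℕ) (b : Bool) : fl m (fl n b) = fl n (fl m b) := by
  rw [← fl_add, ← fl_add, add_comm]

theorem Delta_W (m : ℕ) (l : List ℕ) :
    ∀ c, Delta m * W m c l = W m (fl m c) l * Delta m := by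
  induction l with
  | nil => intro c; simp [W]
  | cons a l ih =>
    intro c
    rw [W, ← mul_assoc, Delta_A, mul_assoc, ih, W, fl_not, fl_comm, mul_assoc]

/-- Realisation of a state. -/
def rho (m : ℕ) (s : Raw) : DA m := W m s.1 s.2.1 * Delta m ^ s.2.2

theorem rho_nrm (m : ℕ) (c : Bool) (l : List ℕ) (k : ℤ) :
    rho m (nrm c l k) = W m c l * Delta m ^ k := by
  cases l <;> simp [nrm, rho, W]

theorem Delta_W_pow (m : ℕ) (c : Bool) (l : List ℕ) (k : ℤ) :
    Delta m * (W m c l * Delta m ^ k) = W m (fl m c) l * Delta m ^ (k + 1) := by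
  rw [← mul_assoc, Delta_W, mul_assoc, zpow_add, zpow_one, ← zpow_one_add, add_comm, zpow_add,
    zpow_one]

theorem rho_stp {m : ℕ} (b : Bool) (s : Raw) (h : Good m s) :
    rho m (stp m b s) = xg m b * rho m s := by
  obtain ⟨c, l, k⟩ := s
  obtain ⟨h1, h2⟩ := h
  cases l with
  | nil => simp [stp, rho, W, A_succ, A_zero]
  | cons a l =>
    simp only [List.mem_cons, forall_eq_or_imp] at h1
    simp only [stp]
    split_ifs with h3 h4
    · subst h3
      have : (!(fl 1 c)) = c := by simp [fl]
      simp [rho, W, A_succ, A_zero, this, mul_assoc]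
    · have hc : c = !b := by cases b <;> cases c <;> simp_all
      simp [rho, W, A_succ, hc, fl_succ, fl_not, mul_assoc]
    · have hc : c = !b := by cases b <;> cases c <;> simp_all
      have ha : m = a + 1 := by omega
      have h5 : xg m b * A m a c = Delta m := by
        rw [hc, ← A_succ, ← A_m m b, ← ha]
      rw [rho_nrm]
      simp only [rho, W]
      rw [mul_assoc, ← mul_assoc (xg m b), h5, Delta_W_pow]
      congr 2
      rw [fl_not, hc, fl_not, ha, fl_succ]
      simp [fl_not, fl_fl]

theorem closure_xg (m : ℕ) : Subgroup.closure (genSet 2 (DMat m)) = ⊤ := by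
  rw [eq_top_iff, ← PresentedGroup.closure_range_of (artinRels 2 (DMat m))]
  apply Subgroup.closure_mono
  rintro _ ⟨i, rfl⟩
  exact ⟨i, Or.inl rfl⟩

/-! ### Word length -/

theorem len_le {m : ℕ} (w : List (DA m)) (hw : ∀ a ∈ w, a ∈ genSet 2 (DMat m)) :
    ℓD m w.prod ≤ w.length :=
  Nat.sInf_le ⟨w, hw, rfl, rfl⟩

theorem genSet_inv {m : ℕ} {a : DA m} (h : a ∈ genSet 2 (DMat m)) :
    a⁻¹ ∈ genSet 2 (DMat m) := by
  obtain ⟨i, rfl | rfl⟩ := h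
  · exact ⟨i, Or.inr rfl⟩
  · exact ⟨i, Or.inl (inv_inv _)⟩

theorem len_spec {m : ℕ} (g : DA m) : ∃ w : List (DA m),
    (∀ a ∈ w, a ∈ genSet 2 (DMat m)) ∧ w.length = ℓD m g ∧ w.prod = g := by
  have hne : {N : ℕ | ∃ w : List (DA m), (∀ a ∈ w, a ∈ genSet 2 (DMat m)) ∧
      w.length = N ∧ w.prod = g}.Nonempty := by
    have hg : g ∈ Subgroup.closure (genSet 2 (DMat m)) := by rw [closure_xg]; trivial
    rw [← Subgroup.mem_toSubmonoid, Subgroup.closure_toSubmonoid] at hg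
    obtain ⟨w, hw, hp⟩ := Submonoid.exists_list_of_mem_closure hg
    refine ⟨w.length, w, fun a ha => ?_, rfl, hp⟩
    rcases hw a ha with h | h
    · exact h
    · simpa using genSet_inv h
  exact Nat.sInf_mem hne

theorem len_one (m : ℕ) : ℓD m 1 = 0 := by
  have := len_le (m := m) [] (by simp)
  simpa using this

theorem len_mul {m : ℕ} (g h : DA m) : ℓD m (g * h) ≤ ℓD m g + ℓD m h := by
  obtain ⟨w, hw, hl, hp⟩ := len_spec g
  obtain ⟨v, hv, hl', hp'⟩ := len_spec h
  have := len_le (w ++ v) (by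
    intro a ha
    rcases List.mem_append.1 ha with h | h
    · exact hw a h
    · exact hv a h)
  rw [List.prod_append, hp, hp', List.length_append, hl, hl'] at this
  exact this

theorem len_inv_le {m : ℕ} (g : DA m) : ℓD m g⁻¹ ≤ ℓD m g := by
  obtain ⟨w, hw, hl, hp⟩ := len_spec g
  have := len_le (w.map (fun x => x⁻¹)).reverse (by
    intro a ha
    simp only [List.mem_reverse, List.mem_map] at ha
    obtain ⟨x, hx, rfl⟩ := ha
    exact genSet_inv (hw x hx))
  rw [← List.prod_inv_reverse, hp, List.length_reverse, List.length_map, hl] at this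
  exact this

theorem len_inv {m : ℕ} (g : DA m) : ℓD m g⁻¹ = ℓD m g := by
  apply le_antisymm (len_inv_le g)
  have := len_inv_le g⁻¹
  rwa [inv_inv] at this

theorem len_xg (m : ℕ) (b : Bool) : ℓD m (xg m b) ≤ 1 := by
  have := len_le [xg m b] (by simpa using ⟨_, Or.inl rfl⟩)
  simpa using this

theorem len_A (m n : ℕ) : ∀ b, ℓD m (A m n b) ≤ n := by
  induction n with
  | zero => intro b; rw [A_zero, len_one]
  | succ n ih =>
    intro b
    rw [A_succ]
    have h1 := len_mul (xg m b) (A m n (!b))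
    have h2 := len_xg m b
    have h3 := ih (!b)
    omega

theorem len_Delta_pow (m : ℕ) (n : ℕ) : ℓD m (Delta m ^ n) ≤ m * n := by
  induction n with
  | zero => simp [len_one]
  | succ n ih =>
    rw [pow_succ]
    have h1 := len_mul (Delta m ^ n) (Delta m)
    have h2 : ℓD m (Delta m) ≤ m := by rw [← A_m m false]; exact len_A m m false
    rw [Nat.mul_succ]
    omega

/-! ### The functions `phi T` -/

/-- The contribution of the factors. -/
def psi (T : ℕ) (l : List ℕ) : ℤ := (l.map (fun a : ℕ => min (a : ℤ) (2 * T - a))).sum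

theorem psi_nil (T : ℕ) : psi T [] = 0 := rfl

theorem psi_cons (T a : ℕ) (l : List ℕ) : psi T (a :: l) = min (a : ℤ) (2 * T - a) + psi T l := by
  simp [psi]

/-- Lower bound functions for the length. -/
def phi (m T : ℕ) (s : Raw) : ℤ := (2 * T - m) * s.2.2 + psi T s.2.1

theorem phi_nrm (m T : ℕ) (c : Bool) (l : List ℕ) (k : ℤ) :
    phi m T (nrm c l k) = (2 * T - m) * k + psi T l := by
  cases l <;> simp [nrm, phi]

theorem phi_stp {m T : ℕ} (hm : 2 ≤ m) (hT : T ≤ m) (b : Bool) (s : Raw) (h : Good m s) :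
    phi m T (stp m b s) = phi m T s + 1 ∨ phi m T (stp m b s) = phi m T s - 1 := by
  obtain ⟨c, l, k⟩ := s
  obtain ⟨h1, h2⟩ := h
  cases l with
  | nil => simp only [stp, phi, psi_cons, psi_nil]; push_cast; omega
  | cons a l =>
    simp only [List.mem_cons, forall_eq_or_imp] at h1
    simp only [stp]
    split_ifs with h3 h4
    · simp only [phi, psi_cons]; push_cast; omega
    · simp only [phi, psi_cons]; push_cast; omega
    · rw [phi_nrm]; simp only [phi, psi_cons, mul_add]; push_cast; omega

theorem phi_convex {m T : ℕ} (hm : 2 ≤ m) (hT : T ≤ m) (b : Bool) (s : Raw) (h : Good m s) :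
    2 * phi m T s ≤ phi m T (stp m b s) + phi m T (stn m b s) := by
  obtain ⟨c, l, k⟩ := s
  obtain ⟨h1, h2⟩ := h
  have e : ((m - 1 : ℕ) : ℤ) = m - 1 := by omega
  cases l with
  | nil =>
    simp only [stp, stn, phi, psi_cons, psi_nil, mul_sub]; push_cast [e]; omega
  | cons a l =>
    simp only [List.mem_cons, forall_eq_or_imp] at h1
    have e' : ((a - 1 : ℕ) : ℤ) = a - 1 := by omega
    simp only [stp, stn]
    split_ifs with h3 h4 h4
    · rw [phi_nrm]; simp only [phi, psi_cons]; push_cast; omega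
    · simp only [phi, psi_cons]; push_cast [e']; omega
    · simp only [phi, psi_cons, mul_sub]; push_cast [e]; omega
    · rw [phi_nrm]; simp only [phi, psi_cons, mul_sub, mul_add]; push_cast [e]; omega

theorem psi_parity (T : ℕ) (l : List ℕ) : ∃ z, psi T l = psi 0 l + 2 * z := by
  induction l with
  | nil => exact ⟨0, by simp [psi_nil]⟩
  | cons a l ih =>
    obtain ⟨z, hz⟩ := ih
    simp only [psi_cons, hz]
    rcases le_total (a : ℤ) (2 * T - a) with h | h
    · refine ⟨z + a, ?_⟩
      rw [min_eq_left h]; push_cast; omega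
    · refine ⟨z + T, ?_⟩
      rw [min_eq_right h]; push_cast; omega

theorem phi_parity (m T : ℕ) (s : Raw) : ∃ z, phi m T s = phi m 0 s + 2 * z := by
  obtain ⟨z, hz⟩ := psi_parity T s.2.1
  refine ⟨z + T * s.2.2, ?_⟩
  simp only [phi, hz]; push_cast; ring

/-- Upper bound for the length. -/
theorem len_upper {m T : ℕ} (hm : 2 ≤ m) (hT : T ≤ m) (l : List ℕ) :
    ∀ (c : Bool) (k : ℤ), (∀ a ∈ l, 1 ≤ a ∧ a < m) →
      (T = 0 ∨ -k ≤ l.countP (fun a => T ≤ a)) →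
      (T = m ∨ (l.countP (fun a => T + 1 ≤ a) : ℤ) ≤ -k) →
      (ℓD m (W m c l * Delta m ^ k) : ℤ) ≤ (2 * T - m) * k + psi T l := by
  induction l with
  | nil =>
    intro c k _ h1 h2
    simp only [List.countP_nil, Nat.cast_zero] at h1 h2
    simp only [W, one_mul, psi_nil, add_zero]
    have key : (ℓD m (Delta m ^ k) : ℤ) ≤ m * |k| := by
      rcases le_total 0 k with h | h
      · lift k to ℕ using h
        rw [zpow_natCast]; simpa using mod_cast len_Delta_pow m k
      · obtain ⟨n, rfl⟩ : ∃ n : ℕ, k = -n := ⟨k.natAbs, by omega⟩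
        rw [zpow_neg, len_inv, zpow_natCast]; simpa using mod_cast len_Delta_pow m n
    refine key.trans ?_
    rcases lt_trichotomy k 0 with h | h | h
    · have : T = 0 := by omega
      rw [abs_of_neg h, this]; push_cast; linarith
    · simp [h]
    · have : T = m := by omega
      rw [abs_of_pos h, this]; push_cast; linarith
  | cons a l ih =>
    intro c k hl h1 h2
    simp only [List.mem_cons, forall_eq_or_imp] at hl
    obtain ⟨ha, hl⟩ := hl
    have keep : (ℓD m (W m c (a :: l) * Delta m ^ k) : ℤ) ≤
        a + ℓD m (W m (!(fl a c)) l * Delta m ^ k) := by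
      rw [W, mul_assoc]
      have h3 := len_mul (A m a c) (W m (!(fl a c)) l * Delta m ^ k)
      have h4 := len_A m a c
      omega
    have flip : ∃ d, (ℓD m (W m c (a :: l) * Delta m ^ k) : ℤ) ≤
        (m - a) + ℓD m (W m d l * Delta m ^ (k + 1)) := by
      refine ⟨fl m (!(fl a c)), ?_⟩
      have h5 : Delta m = A m (m - a) (fl (m - a) c) * A m a c := by
        have := A_add m (m - a) a (fl (m - a) c)
        rw [fl_fl, show m - a + a = m by omega, A_m] at this
        exact this
      have h6 : A m a c = (A m (m - a) (fl (m - a) c))⁻¹ * Delta m := by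
        rw [h5]; simp
      rw [W, mul_assoc, h6, mul_assoc, Delta_W_pow]
      have h3 := len_mul (A m (m - a) (fl (m - a) c))⁻¹
        (W m (fl m (!(fl a c))) l * Delta m ^ (k + 1))
      rw [len_inv] at h3
      have h4 := len_A m (m - a) (fl (m - a) c)
      omega
    have ihk : ∀ d, (T = 0 ∨ -k ≤ l.countP (fun a => T ≤ a)) →
      (T = m ∨ (l.countP (fun a => T + 1 ≤ a) : ℤ) ≤ -k) → _ := fun d => ih d k hl
    have ihk1 : ∀ d, (T = 0 ∨ -(k + 1) ≤ l.countP (fun a => T ≤ a)) →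
      (T = m ∨ (l.countP (fun a => T + 1 ≤ a) : ℤ) ≤ -(k + 1)) → _ := fun d => ih d (k + 1) hl
    obtain ⟨d, flip⟩ := flip
    specialize ihk (!(fl a c))
    specialize ihk1 d
    rw [mul_add, mul_one] at ihk1
    rw [psi_cons]
    simp only [List.countP_cons, decide_eq_true_eq] at h1 h2
    rcases lt_trichotomy a T with h | h | h
    · rw [if_neg (by omega)] at h1 h2
      have := ihk (by omega) (by omega)
      omega
    · rw [if_pos (by omega)] at h1
      rw [if_neg (by omega)] at h2
      by_cases h7 : -k ≤ l.countP (fun a => T ≤ a)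
      · have := ihk (by omega) (by omega)
        omega
      · have h8 : l.countP (fun a => T + 1 ≤ a) ≤ l.countP (fun a => T ≤ a) :=
          List.countP_mono_left (by intro x _ hx; simp at hx ⊢; omega)
        have := ihk1 (by omega) (by omega)
        omega
    · rw [if_pos (by omega)] at h1 h2
      have := ihk1 (by omega) (by omega)
      omega

theorem exists_T (m : ℕ) (l : List ℕ) (k : ℤ) : ∃ T, T ≤ m ∧
      (T = 0 ∨ -k ≤ l.countP (fun a => T ≤ a)) ∧
      (T = m ∨ (l.countP (fun a => T + 1 ≤ a) : ℤ) ≤ -k) := by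
  classical
  let Q : ℕ → Prop := fun T => T = 0 ∨ -k ≤ l.countP (fun a => T ≤ a)
  have hQ : Q (Nat.findGreatest Q m) := Nat.findGreatest_spec (m := 0) (Nat.zero_le _) (Or.inl rfl)
  refine ⟨Nat.findGreatest Q m, Nat.findGreatest_le _, hQ, ?_⟩
  by_cases h : Nat.findGreatest Q m = m
  · exact Or.inl h
  · right
    have hle := Nat.findGreatest_le (P := Q) m
    have := Nat.findGreatest_is_greatest (P := Q) (Nat.lt_succ_self (Nat.findGreatest Q m))
      (by omega)
    exact le_of_lt (not_le.1 fun h3 => this (Or.inr h3))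

/-- The base state. -/
def base (m : ℕ) : St m := ⟨(true, [], 0), by simp [Good]⟩

/-- The state of a group element. -/
def st (m : ℕ) (hm : 2 ≤ m) (g : DA m) : St m := act m hm g (base m)

theorem st_mul (m : ℕ) (hm : 2 ≤ m) (b : Bool) (g : DA m) :
    (st m hm (xg m b * g)).1 = stp m b (st m hm g).1 := by
  simp only [st, map_mul, Equiv.Perm.mul_apply, act_xg]; rfl

theorem st_inv_mul (m : ℕ) (hm : 2 ≤ m) (b : Bool) (g : DA m) :
    (st m hm ((xg m b)⁻¹ * g)).1 = stn m b (st m hm g).1 := by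
  simp only [st, map_mul, map_inv, Equiv.Perm.mul_apply, act_xg]; rfl

theorem phi_st_mul {m T : ℕ} (hm : 2 ≤ m) (hT : T ≤ m) (b : Bool) (g : DA m) :
    phi m T (st m hm (xg m b * g)).1 = phi m T (st m hm g).1 + 1 ∨
    phi m T (st m hm (xg m b * g)).1 = phi m T (st m hm g).1 - 1 := by
  rw [st_mul]; exact phi_stp hm hT b _ (st m hm g).2

theorem phi_le_len {m T : ℕ} (hm : 2 ≤ m) (hT : T ≤ m) (g : DA m) :
    phi m T (st m hm g).1 ≤ ℓD m g := by
  obtain ⟨w, hw, hl, hp⟩ := len_spec g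
  rw [← hl, ← hp]
  clear hl hp
  induction w with
  | nil => simp [st, base, phi, psi_nil]
  | cons a w ih =>
    simp only [List.mem_cons, forall_eq_or_imp] at hw
    have ih := ih hw.2
    obtain ⟨i, hi⟩ := hw.1
    obtain ⟨b, hb⟩ := exists_xg m i
    rw [hb] at hi
    rw [List.prod_cons, List.length_cons]
    push_cast
    rcases hi with rfl | rfl
    · have := phi_st_mul hm hT b w.prod
      omega
    · have := phi_st_mul hm hT b ((xg m b)⁻¹ * w.prod)
      rw [mul_inv_cancel_left] at this
      omega

theorem rho_st {m : ℕ} (hm : 2 ≤ m) (g : DA m) : rho m (st m hm g).1 = g := by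
  obtain ⟨w, hw, hl, rfl⟩ := len_spec g
  clear hl
  induction w with
  | nil => simp [st, base, rho, W]
  | cons a w ih =>
    simp only [List.mem_cons, forall_eq_or_imp] at hw
    have ih := ih hw.2
    obtain ⟨i, hi⟩ := hw.1
    obtain ⟨b, hb⟩ := exists_xg m i
    rw [hb] at hi
    rw [List.prod_cons]
    rcases hi with rfl | rfl
    · rw [st_mul, rho_stp b _ (st m hm _).2, ih]
    · have h := rho_stp b _ (st m hm ((xg m b)⁻¹ * w.prod)).2
      rw [← st_mul, mul_inv_cancel_left, ih] at h
      nth_rewrite 2 [h]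
      simp

theorem len_eq {m : ℕ} (hm : 2 ≤ m) (g : DA m) :
    ∃ T, T ≤ m ∧ (ℓD m g : ℤ) = phi m T (st m hm g).1 := by
  obtain ⟨T, hT, h1, h2⟩ := exists_T m (st m hm g).1.2.1 (st m hm g).1.2.2
  refine ⟨T, hT, le_antisymm ?_ (phi_le_len hm hT g)⟩
  have := len_upper hm hT (st m hm g).1.2.1 (st m hm g).1.1 (st m hm g).1.2.2
    (st m hm g).2.1 h1 h2
  have h3 := rho_st hm g
  unfold rho at h3
  rw [h3] at this
  exact this

theorem len_convex {m : ℕ} (hm : 2 ≤ m) (b : Bool) (g : DA m) :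
    2 * ℓD m g ≤ ℓD m (xg m b * g) + ℓD m ((xg m b)⁻¹ * g) := by
  obtain ⟨T, hT, h⟩ := len_eq hm g
  have h1 := phi_convex hm hT b _ (st m hm g).2
  rw [← st_mul, ← st_inv_mul] at h1
  have h2 := phi_le_len hm hT (xg m b * g)
  have h3 := phi_le_len hm hT ((xg m b)⁻¹ * g)
  omega

theorem len_step {m : ℕ} (hm : 2 ≤ m) (b : Bool) (g : DA m) :
    ℓD m (xg m b * g) = ℓD m g + 1 ∨ ℓD m g = ℓD m (xg m b * g) + 1 := by
  obtain ⟨T, hT, h⟩ := len_eq hm g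
  obtain ⟨T', hT', h'⟩ := len_eq hm (xg m b * g)
  obtain ⟨z, hz⟩ := phi_parity m T (st m hm g).1
  obtain ⟨z', hz'⟩ := phi_parity m T' (st m hm (xg m b * g)).1
  have h0 := phi_st_mul hm (Nat.zero_le m) b g
  have h1 := phi_st_mul hm hT b g
  have h2 := phi_st_mul hm hT' b g
  have h3 := phi_le_len hm hT (xg m b * g)
  have h4 := phi_le_len hm hT' g
  omega

/-- A convex function with slopes `±1` is V-shaped. -/
theorem v_shape (f : ℤ → ℕ) (h1 : ∀ s, f (s + 1) = f s + 1 ∨ f s = f (s + 1) + 1)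
    (h2 : ∀ s, 2 * f s ≤ f (s + 1) + f (s - 1)) :
    ∃ c, ∀ s, f s = f c + (s - c).natAbs := by
  obtain ⟨c, hc⟩ : ∃ c, ∀ s, f c ≤ f s :=
    ⟨Function.argmin f, fun s => Function.argmin_le f s⟩
  have up : ∀ n : ℕ, f (c + n) = f c + n ∧ f (c + n + 1) = f c + n + 1 := by
    intro n
    induction n with
    | zero =>
      have := h1 c
      have := hc (c + 1)
      simp
      omega
    | succ n ih =>
      have a1 := h2 (c + n + 1)
      have a2 := h1 (c + n + 1)
      rw [show c + (n : ℤ) + 1 - 1 = c + n by ring] at a1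
      push_cast
      rw [← add_assoc]
      omega
  have dn : ∀ n : ℕ, f (c - n) = f c + n ∧ f (c - n - 1) = f c + n + 1 := by
    intro n
    induction n with
    | zero =>
      have := h1 (c - 1)
      have := hc (c - 1)
      simp at *
      omega
    | succ n ih =>
      have a1 := h2 (c - n - 1)
      have a2 := h1 (c - n - 1 - 1)
      rw [show c - (n : ℤ) - 1 + 1 = c - n by ring] at a1
      rw [show c - (n : ℤ) - 1 - 1 + 1 = c - n - 1 by ring] at a2
      push_cast
      rw [← sub_sub]
      omega
  refine ⟨c, fun s => ?_⟩
  rcases le_total c s with h | h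
  · obtain ⟨n, rfl⟩ : ∃ n : ℕ, s = c + n := ⟨(s - c).natAbs, by omega⟩
    rw [(up n).1]; omega
  · obtain ⟨n, rfl⟩ : ∃ n : ℕ, s = c - n := ⟨(s - c).natAbs, by omega⟩
    rw [(dn n).1]; omega

/-- **Lemma.** If `g h` lies in the cyclic subgroup `⟨x_i⟩` of a dihedral Artin group,
then `g` and `h` have geodesic factorisations `x_i^s w` and `w⁻¹ x_i^t`. -/
theorem factorisation_of_product_in_cyclic
    (m : ℕ) (hm : 2 ≤ m) (g h : DA m) (i : Fin 2)
    (hgh : g * h ∈ Subgroup.zpowers (gen 2 (DMat m) i)) :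
    ∃ (w : DA m) (s t : ℤ),
      g = gen 2 (DMat m) i ^ s * w ∧ ℓD m g = s.natAbs + ℓD m w ∧
      h = w⁻¹ * gen 2 (DMat m) i ^ t ∧ ℓD m h = ℓD m w + t.natAbs := by
  obtain ⟨b, hb⟩ := exists_xg m i
  rw [hb] at hgh ⊢
  obtain ⟨K, hK⟩ := Subgroup.mem_zpowers_iff.1 hgh
  obtain ⟨c, hc⟩ := v_shape (fun s => ℓD m (xg m b ^ s * g))
    (by
      intro s
      have := len_step hm b (xg m b ^ s * g)
      rwa [← mul_assoc, ← zpow_one_add, add_comm] at this)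
    (by
      intro s
      have := len_convex hm b (xg m b ^ s * g)
      rwa [← mul_assoc, ← mul_assoc, ← zpow_one_add, ← zpow_neg_one, ← zpow_add, add_comm 1 s,
        neg_add_eq_sub] at this)
  have hh : h = g⁻¹ * xg m b ^ K := by rw [hK]; simp
  refine ⟨xg m b ^ c * g, -c, c + K, ?_, ?_, ?_, ?_⟩
  · simp
  · have := hc 0
    simp only [zpow_zero, one_mul] at this
    omega
  · rw [hh, zpow_add]; group
  · have h1 := hc (-K)
    have h2 : h⁻¹ = xg m b ^ (-K) * g := by rw [hh]; simp
    simp only [← h2, len_inv] at h1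
    omega

end ArtinRD
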